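/- Minimizers of Newton's problem in the class of concave functions are not rotationally symmetric: for every M > 0, if u : Ω → [0, M] is concave and minimizes J over all concave functions v : Ω → [0, M], then u is not radially symmetric, i.e., there exist points x, y ∈ Ω with |x| = |y| and u(x) ≠ u(y). -/

import Mathlib

open Set MeasureTheory

/-- The open unit disc in `ℝ²`. -/
noncomputable def Omega : Set (EuclideanSpace ℝ (Fin 2)) :=
  Metric.ball (0 : EuclideanSpace ℝ (Fin 2)) 1

/-- Newton's resistance functional `J(u) = ∫_Ω 1/(|∇u|² + 1) dx`. -/
noncomputable def J (u : EuclideanSpace ℝ (Fin 2) → ℝ) : ℝ :=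
  ∫ x in Omega, 1 / (‖gradient u x‖ ^ 2 + 1)

/-!
A radial admissible function has a nonincreasing profile `φ` with total descent at most `M`.
Minimizing the Lagrangian `T * r * resistance τ + τ` pointwise in the slope `τ` shows that Newton's
body of height `M`, whose multiplier `1 / T` is determined by `M`, beats every such function.
Newton's body `u` is in turn not optimal among concave functions. Outside its flat part it is
strongly concave, so adding `± ε q` keeps it admissible for a smooth bump `q` supported there and
small `ε`. The integrand `1 / (1 + |p|²)` is strictly concave at `p` in the directions orthogonal
to `p`, so if `q` oscillates fast enough tangentially, then `J (u + ε q) + J (u - ε q) < 2 J u`.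
-/

open Filter Topology Metric

theorem differentiableAt_of_comp_norm {E : Type*} [NormedAddCommGroup E] [NormedSpace ℝ E]
    {φ : ℝ → ℝ} {x : E} (hx : x ≠ 0) (h : DifferentiableAt ℝ (fun y : E => φ ‖y‖) x) :
    DifferentiableAt ℝ φ ‖x‖ := by
  have hx0 : 0 < ‖x‖ := norm_pos_iff.mpr hx
  have hray : DifferentiableAt ℝ (fun r : ℝ => (r / ‖x‖) • x) ‖x‖ := by fun_prop
  have hcomp : DifferentiableAt ℝ ((fun y : E => φ ‖y‖) ∘ fun r : ℝ => (r / ‖x‖) • x) ‖x‖ :=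
    DifferentiableAt.comp _ (by rwa [div_self hx0.ne', one_smul]) hray
  refine hcomp.congr_of_eventuallyEq ?_
  filter_upwards [lt_mem_nhds hx0] with r hr
  rw [Function.comp_apply, norm_smul, norm_div, norm_norm, Real.norm_of_nonneg hr.le,
    div_mul_cancel₀ _ hx0.ne']

section RadialGradient

variable {E : Type*} [NormedAddCommGroup E] [InnerProductSpace ℝ E] [CompleteSpace E]

theorem hasGradientAt_norm {x : E} (hx : x ≠ 0) :
    HasGradientAt (fun y : E => ‖y‖) (‖x‖⁻¹ • x) x := by
  have hsqrt := (hasStrictFDerivAt_norm_sq x).hasFDerivAt.sqrt (by positivity)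
  simp only [Real.sqrt_sq (norm_nonneg _)] at hsqrt
  rw [hasGradientAt_iff_hasFDerivAt]
  refine hsqrt.congr_fderiv ?_
  ext y
  simp only [smul_apply, smul_eq_mul, innerSL_apply_apply, nsmul_eq_mul,
    InnerProductSpace.toDual_apply_apply, real_inner_smul_left]
  push_cast
  field_simp

theorem hasGradientAt_comp_norm {φ : ℝ → ℝ} {φ' : ℝ} {x : E} (hx : x ≠ 0)
    (hφ : HasDerivAt φ φ' ‖x‖) :
    HasGradientAt (fun y : E => φ ‖y‖) ((φ' / ‖x‖) • x) x := by
  rw [hasGradientAt_iff_hasFDerivAt]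
  refine (hφ.comp_hasFDerivAt x (hasGradientAt_norm hx).hasFDerivAt).congr_fderiv ?_
  rw [map_smul, map_smul, smul_smul, div_eq_mul_inv]

/-- Junk values match: both sides vanish where `φ` is not differentiable. -/
theorem norm_gradient_of_eventuallyEq_comp_norm {φ : ℝ → ℝ} {u : E → ℝ} {x : E} (hx : x ≠ 0)
    (h : u =ᶠ[𝓝 x] fun y => φ ‖y‖) : ‖gradient u x‖ = |deriv φ ‖x‖| := by
  rw [h.gradient_eq]
  by_cases hφ : DifferentiableAt ℝ φ ‖x‖
  · rw [(hasGradientAt_comp_norm hx hφ.hasDerivAt).gradient, norm_smul, norm_div, norm_norm,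
      Real.norm_eq_abs, div_mul_cancel₀ _ (norm_ne_zero_iff.mpr hx)]
  · rw [deriv_zero_of_not_differentiableAt hφ, abs_zero, norm_eq_zero]
    exact gradient_eq_zero_of_not_differentiableAt fun hu =>
      hφ (differentiableAt_of_comp_norm hx hu)

theorem measurable_norm_gradient [MeasurableSpace E] [BorelSpace E] (u : E → ℝ) :
    Measurable fun x => ‖gradient u x‖ := by
  simp only [gradient, LinearIsometryEquiv.norm_map]
  exact (measurable_fderiv ℝ u).norm

end RadialGradient

theorem setIntegral_ball_fun_norm_addHaar {E F : Type*} [NormedAddCommGroup E] [NormedSpace ℝ E]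
    [FiniteDimensional ℝ E] [Nontrivial E] [MeasurableSpace E] [BorelSpace E]
    [NormedAddCommGroup F] [NormedSpace ℝ F] (μ : Measure E) [μ.IsAddHaarMeasure]
    (f : ℝ → F) (R : ℝ) :
    ∫ x in ball (0 : E) R, f ‖x‖ ∂μ =
      Module.finrank ℝ E • μ.real (ball 0 1) •
        ∫ r in Ioo 0 R, r ^ (Module.finrank ℝ E - 1) • f r := by
  have hball : (ball (0 : E) R).indicator (fun x => f ‖x‖) =
      fun x => (Iio R).indicator f ‖x‖ := by
    funext x
    simp only [indicator, mem_ball_zero_iff, mem_Iio]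
  rw [← integral_indicator measurableSet_ball, hball, integral_fun_norm_addHaar, ← Ioi_inter_Iio,
    ← setIntegral_indicator measurableSet_Iio]
  simp only [indicator_smul_apply]

/-- The resistance of a surface element of slope `s`: the integrand of Newton's functional. -/
noncomputable def resistance (s : ℝ) : ℝ := 1 / (s ^ 2 + 1)

theorem resistance_nonneg (s : ℝ) : 0 ≤ resistance s := by
  unfold resistance; positivity

theorem resistance_le_one (s : ℝ) : resistance s ≤ 1 :=
  div_le_one_of_le₀ (by nlinarith [sq_nonneg s]) (by positivity)

theorem resistance_abs (s : ℝ) : resistance |s| = resistance s := by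
  simp only [resistance, sq_abs]

theorem measurable_resistance : Measurable resistance := by
  unfold resistance; fun_prop

theorem J_eq_setIntegral_resistance (u : EuclideanSpace ℝ (Fin 2) → ℝ) :
    J u = ∫ x in Omega, resistance ‖gradient u x‖ := rfl

theorem J_eq_of_radial {u : EuclideanSpace ℝ (Fin 2) → ℝ} {φ : ℝ → ℝ}
    (hu : ∀ x ∈ Omega, u x = φ ‖x‖) :
    J u = 2 * volume.real Omega * ∫ r in Ioo (0 : ℝ) 1, r * resistance (deriv φ r) := by
  have hJ : J u = ∫ x in Omega, resistance (deriv φ ‖x‖) := by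
    refine integral_congr_ae ?_
    filter_upwards [Measure.ae_ne (volume.restrict Omega) 0, ae_restrict_mem measurableSet_ball]
      with x hx hxO
    rw [norm_gradient_of_eventuallyEq_comp_norm hx
      (eventually_of_mem (isOpen_ball.mem_nhds hxO) hu)]
    exact resistance_abs _
  rw [hJ, Omega, setIntegral_ball_fun_norm_addHaar volume (fun r => resistance (deriv φ r))]
  simp only [finrank_euclideanSpace, Fintype.card_fin, nsmul_eq_mul, smul_eq_mul, Nat.cast_ofNat,
    Nat.add_one_sub_one, pow_one, mul_assoc]

theorem integrable_mul_resistance {α : Type*} [MeasurableSpace α] {μ : Measure α} {w s : α → ℝ}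
    (hw : Integrable w μ) (hs : AEMeasurable s μ) :
    Integrable (fun x => w x * resistance (s x)) μ :=
  hw.mul_bdd (c := 1) (measurable_resistance.comp_aemeasurable hs).aestronglyMeasurable
    (.of_forall fun x => by
      simpa only [Real.norm_of_nonneg (resistance_nonneg _)] using resistance_le_one _)

/-- Lagrangian duality: a pointwise minimizer of the Lagrangian is optimal among all slopes with
no larger total descent. -/
theorem integral_mul_resistance_le_of_isMinOn {α : Type*} [MeasurableSpace α] {μ : Measure α}
    {T : ℝ} (hT : 0 < T) {w s g : α → ℝ} (hw : Integrable w μ) (hs : Integrable s μ)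
    (hg : Integrable g μ) (hg0 : 0 ≤ᵐ[μ] g) (hgs : ∫ x, g x ∂μ ≤ ∫ x, s x ∂μ)
    (hmin : ∀ᵐ x ∂μ, IsMinOn (fun τ => T * w x * resistance τ + τ) (Ici 0) (s x)) :
    ∫ x, w x * resistance (s x) ∂μ ≤ ∫ x, w x * resistance (g x) ∂μ := by
  have hint {k : α → ℝ} (hk : Integrable k μ) :
      Integrable (fun x => T * (w x * resistance (k x))) μ :=
    (integrable_mul_resistance hw hk.aemeasurable).const_mul T
  have hlagrangian : ∫ x, T * (w x * resistance (s x)) + s x ∂μ ≤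
      ∫ x, T * (w x * resistance (g x)) + g x ∂μ := by
    refine integral_mono_ae ((hint hs).add hs) ((hint hg).add hg) ?_
    filter_upwards [hmin, hg0] with x hx hgx
    simpa only [mul_assoc, mem_ofPred_eq] using hx hgx
  rw [integral_add (hint hs) hs, integral_add (hint hg) hg, integral_const_mul,
    integral_const_mul] at hlagrangian
  exact le_of_mul_le_mul_left (by linarith) hT

theorem integrableOn_deriv_of_antitoneOn {f : ℝ → ℝ} {a b : ℝ} (hab : a ≤ b)
    (hf : AntitoneOn f (Icc a b)) : IntegrableOn (deriv f) (Ioo a b) := by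
  rw [← uIcc_of_le hab] at hf
  have h := hf.neg.intervalIntegrable_deriv
  rw [intervalIntegrable_iff_integrableOn_Ioo_of_le hab] at h
  simpa only [deriv.fun_neg, Pi.neg_def, neg_neg] using h.neg

theorem deriv_nonpos_of_antitoneOn {f : ℝ → ℝ} {a b x : ℝ} (hf : AntitoneOn f (Icc a b))
    (hx : x ∈ Ioo a b) : deriv f x ≤ 0 := by
  rw [← derivWithin_of_mem_nhds (Icc_mem_nhds hx.1 hx.2)]
  exact hf.derivWithin_nonpos

/-- Only an inequality, since `f` may have jumps and a singular part. -/
theorem setIntegral_abs_deriv_le_of_antitoneOn {f : ℝ → ℝ} {a b : ℝ} (hab : a ≤ b)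
    (hf : AntitoneOn f (Icc a b)) : ∫ x in Ioo a b, |deriv f x| ≤ f a - f b := by
  have habs : EqOn (fun x => |deriv f x|) (deriv (-f)) (Ioo a b) := fun x hx =>
    (abs_of_nonpos (deriv_nonpos_of_antitoneOn hf hx)).trans deriv.neg.symm
  have hfab : (-f) a ≤ (-f) b := neg_le_neg (hf (left_mem_Icc.2 hab) (right_mem_Icc.2 hab) hab)
  have h := MonotoneOn.intervalIntegral_deriv_mem_uIcc (f := -f) (uIcc_of_le hab ▸ hf.neg)
  rw [intervalIntegral.integral_of_le hab, integral_Ioc_eq_integral_Ioo,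
    uIcc_of_le (sub_nonneg.2 hfab)] at h
  rw [setIntegral_congr_fun measurableSet_Ioo habs]
  simpa only [Pi.neg_apply, neg_sub_neg] using h.2

theorem le_apply_smul_of_concaveOn {E : Type*} [AddCommGroup E] [Module ℝ E]
    {s : Set E} {f : E → ℝ} (hf : ConcaveOn ℝ s f) {x : E} (hx : x ∈ s) (hnx : -x ∈ s)
    (heven : f (-x) = f x) {t : ℝ} (ht : t ∈ Icc (-1) 1) : f x ≤ f (t • x) := by
  have hseg : t • x ∈ segment ℝ x (-x) := by
    refine ⟨(1 + t) / 2, (1 - t) / 2, by linarith [ht.1], by linarith [ht.2], by ring, ?_⟩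
    module
  simpa only [heven, min_self] using hf.min_le_of_mem_segment hx hnx hseg

/-- The profile is `r ↦ u (r • e)` for a unit vector `e`, set to `0` at the boundary. -/
theorem exists_profile_of_radial {M : ℝ} {u : EuclideanSpace ℝ (Fin 2) → ℝ}
    (hu : ConcaveOn ℝ Omega u) (huM : ∀ x ∈ Omega, u x ∈ Icc 0 M)
    (hrad : ∀ x ∈ Omega, ∀ y ∈ Omega, ‖x‖ = ‖y‖ → u x = u y) :
    ∃ φ : ℝ → ℝ, AntitoneOn φ (Icc 0 1) ∧ φ 0 - φ 1 ≤ M ∧ ∀ x ∈ Omega, u x = φ ‖x‖ := by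
  obtain ⟨e, he⟩ : ∃ e : EuclideanSpace ℝ (Fin 2), ‖e‖ = 1 := exists_norm_eq _ zero_le_one
  have hnorm {r : ℝ} (hr : 0 ≤ r) : ‖r • e‖ = r := by
    rw [norm_smul, he, mul_one, Real.norm_of_nonneg hr]
  have hmem {r : ℝ} (hr : 0 ≤ r) (hr1 : r < 1) : r • e ∈ Omega := by
    rwa [Omega, mem_ball_zero_iff, hnorm hr]
  refine ⟨fun r => if r < 1 then u (r • e) else 0, ?_, ?_, fun x hx => ?_⟩
  · intro a ⟨ha, _⟩ b ⟨hb, _⟩ hab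
    beta_reduce
    split_ifs with hb1 ha1 ha1
    · have hnb : -(b • e) ∈ Omega := by rw [Omega, mem_ball_zero_iff, norm_neg, hnorm hb]; exact hb1
      have heven := hrad _ hnb _ (hmem hb hb1) (norm_neg _)
      rcases hb.eq_or_lt with rfl | hb0
      · rw [le_antisymm hab ha]
      have hle := le_apply_smul_of_concaveOn hu (hmem hb hb1) hnb heven (t := a / b)
        ⟨by linarith [div_nonneg ha hb], div_le_one_of_le₀ hab hb⟩
      rwa [smul_smul, div_mul_cancel₀ _ hb0.ne'] at hle
    · exact absurd (hab.trans_lt hb1) ha1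
    · exact (huM _ (hmem ha ha1)).1
    · exact le_rfl
  · simpa using (huM 0 (by simp [Omega])).2
  · have hx1 : ‖x‖ < 1 := mem_ball_zero_iff.1 hx
    simp only [hx1, if_true]
    exact hrad x hx _ (hmem (norm_nonneg x) hx1) (hnorm (norm_nonneg x)).symm

section Concave

variable {E : Type*} [NormedAddCommGroup E]

theorem concaveOn_comp_norm [NormedSpace ℝ E] {ψ : ℝ → ℝ} {R : ℝ} (hψ : ConcaveOn ℝ (Ico 0 R) ψ)
    (hanti : AntitoneOn ψ (Ico 0 R)) : ConcaveOn ℝ (ball (0 : E) R) fun x => ψ ‖x‖ := by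
  have hmem {x : E} (hx : x ∈ ball (0 : E) R) : ‖x‖ ∈ Ico 0 R :=
    ⟨norm_nonneg x, mem_ball_zero_iff.1 hx⟩
  refine ⟨convex_ball 0 R, fun x hx y hy a b ha hb hab => ?_⟩
  calc a • ψ ‖x‖ + b • ψ ‖y‖ ≤ ψ (a • ‖x‖ + b • ‖y‖) := hψ.2 (hmem hx) (hmem hy) ha hb hab
    _ ≤ ψ ‖a • x + b • y‖ := by
      refine hanti (hmem (convex_ball 0 R hx hy ha hb hab))
        (hψ.1 (hmem hx) (hmem hy) ha hb hab) ?_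
      simpa only [norm_smul_of_nonneg ha, norm_smul_of_nonneg hb, smul_eq_mul] using
        norm_add_le (a • x) (b • y)

theorem concaveOn_univ_of_forall_lineMap {V : Type*} [AddCommGroup V] [Module ℝ V] {F : V → ℝ}
    (h : ∀ x y : V, ConcaveOn ℝ univ fun t : ℝ => F (AffineMap.lineMap x y t)) :
    ConcaveOn ℝ univ F := by
  refine ⟨convex_univ, fun x _ y _ a b ha hb hab => ?_⟩
  obtain rfl : a = 1 - b := eq_sub_of_add_eq hab
  simpa [AffineMap.lineMap_apply_module] using (h x y).2 (mem_univ 0) (mem_univ 1) ha hb hab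

variable [InnerProductSpace ℝ E]

theorem strongConcaveOn_univ_of_lipschitzWith_fderiv {q : E → ℝ} {C : NNReal}
    (hq : Differentiable ℝ q) (hC : LipschitzWith C (fderiv ℝ q)) :
    StrongConcaveOn univ (-C) q := by
  refine strongConcaveOn_iff_convex.2 (concaveOn_univ_of_forall_lineMap fun x y => ?_)
  set γ : ℝ →ᵃ[ℝ] E := AffineMap.lineMap x y
  have hγ (t : ℝ) : HasDerivAt γ (y - x) t := AffineMap.hasDerivAt_lineMap
  have hderiv (t : ℝ) : HasDerivAt (fun t => q (γ t) + -(C : ℝ) / 2 * ‖γ t‖ ^ 2)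
      (fderiv ℝ q (γ t) (y - x) + -(C : ℝ) / 2 * (2 * inner ℝ (γ t) (y - x))) t :=
    ((hq _).hasFDerivAt.comp_hasDerivAt t (hγ t)).add ((hγ t).norm_sq.const_mul _)
  refine Antitone.concaveOn_univ_of_deriv (fun t => (hderiv t).differentiableAt) ?_
  intro s t hst
  rw [(hderiv s).deriv, (hderiv t).deriv]
  have hsub : γ t - γ s = (t - s) • (y - x) := by
    simp only [γ, AffineMap.lineMap_apply_module']
    module
  have hgrad : fderiv ℝ q (γ t) (y - x) - fderiv ℝ q (γ s) (y - x) ≤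
      C * inner ℝ (γ t - γ s) (y - x) := calc
    _ = (fderiv ℝ q (γ t) - fderiv ℝ q (γ s)) (y - x) := (sub_apply _ _ _).symm
    _ ≤ ‖fderiv ℝ q (γ t) - fderiv ℝ q (γ s)‖ * ‖y - x‖ :=
      (Real.le_norm_self _).trans (ContinuousLinearMap.le_opNorm _ _)
    _ ≤ C * ‖γ t - γ s‖ * ‖y - x‖ := by gcongr; exact hC.norm_sub_le _ _
    _ = C * inner ℝ (γ t - γ s) (y - x) := by
      rw [hsub, norm_smul_of_nonneg (sub_nonneg.2 hst), real_inner_smul_left,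
        real_inner_self_eq_norm_sq]
      ring
  rw [inner_sub_left] at hgrad
  linarith

theorem eventually_concaveOn_add_const_mul {s : Set E} {f q : E → ℝ} {c : ℝ} (hc : 0 < c)
    (hf : StrongConcaveOn s c f) (hq : ContDiff ℝ 2 q) (hqc : HasCompactSupport q) :
    ∀ᶠ ε : ℝ in 𝓝 0, ConcaveOn ℝ s fun x => f x + ε * q x := by
  obtain ⟨C, hC⟩ := (hq.fderiv_right (m := 1) le_rfl).lipschitzWith_of_hasCompactSupport
    (hqc.fderiv ℝ) one_ne_zero
  have hcont : Continuous fun ε : ℝ => ‖ε‖ * C := by fun_prop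
  have hsmall : ∀ᶠ ε : ℝ in 𝓝 0, ‖ε‖ * C < c :=
    hcont.continuousAt.eventually_lt continuousAt_const (by simpa using hc)
  filter_upwards [hsmall] with ε hε
  have hqdiff : Differentiable ℝ q := hq.differentiable two_ne_zero
  have hlip : LipschitzWith (‖ε‖₊ * C) (fderiv ℝ (ε • q)) := by
    have : fderiv ℝ (ε • q) = ε • fderiv ℝ q := funext fun x => fderiv_const_smul (hqdiff x) ε
    exact this ▸ (lipschitzWith_smul ε).comp hC
  have hεq := strongConcaveOn_univ_of_lipschitzWith_fderiv (hqdiff.const_smul ε) hlip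
  rw [strongConcaveOn_iff_convex] at hεq
  have hsum := hf.add (strongConcaveOn_iff_convex.2 (hεq.subset (subset_univ s) hf.1))
  refine UniformConcaveOn.concaveOn hsum fun r => ?_
  have : 0 ≤ (c - ‖ε‖ * C) / 2 * r ^ 2 := by have := sub_nonneg.2 hε.le; positivity
  simp only [Pi.zero_apply, Pi.add_apply, NNReal.coe_mul, coe_nnnorm]
  linarith

end Concave

theorem eventually_forall_add_mul_mem_Ioo {X : Type*} [TopologicalSpace X] {K : Set X}
    (hK : IsCompact K) {f q : X → ℝ} (hf : Continuous f) (hq : Continuous q) {a b : ℝ}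
    (hab : ∀ x ∈ K, f x ∈ Ioo a b) :
    ∀ᶠ ε : ℝ in 𝓝 0, ∀ x ∈ K, f x + ε * q x ∈ Ioo a b := by
  refine hK.eventually_forall_of_forall_eventually fun x hx => ?_
  have hcont : Continuous fun z : ℝ × X => f z.2 + z.1 * q z.2 := by fun_prop
  exact hcont.continuousAt.eventually_mem (by simpa using Ioo_mem_nhds (hab x hx).1 (hab x hx).2)

theorem resistance_second_difference {V : Type*} [NormedAddCommGroup V] [InnerProductSpace ℝ V]
    (p g : V) :
    resistance ‖p + g‖ + resistance ‖p - g‖ - 2 * resistance ‖p‖ =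
      2 * (4 * inner ℝ p g ^ 2 - (1 + ‖p‖ ^ 2 + ‖g‖ ^ 2) * ‖g‖ ^ 2) /
        ((‖p + g‖ ^ 2 + 1) * (‖p - g‖ ^ 2 + 1) * (‖p‖ ^ 2 + 1)) := by
  have hadd : ‖p + g‖ ^ 2 + 1 ≠ 0 := by positivity
  have hsub : ‖p - g‖ ^ 2 + 1 ≠ 0 := by positivity
  unfold resistance
  rw [norm_add_sq_real] at hadd ⊢
  rw [norm_sub_sq_real] at hsub ⊢
  field_simp
  ring

theorem four_mul_inner_sq_sub_le {S : ℝ} {p g : EuclideanSpace ℝ (Fin 2)} (hpS : ‖p‖ ≤ S)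
    (hp : 8 * p 1 ^ 2 ≤ ‖p‖ ^ 2) :
    4 * inner ℝ p g ^ 2 - (1 + ‖p‖ ^ 2 + ‖g‖ ^ 2) * ‖g‖ ^ 2 ≤ 8 * S ^ 2 * g 0 ^ 2 - g 1 ^ 2 := by
  have hinner : inner ℝ p g = p 0 * g 0 + p 1 * g 1 := by
    simp [PiLp.inner_apply, Fin.sum_univ_two, mul_comm]
  have hp2 : ‖p‖ ^ 2 = p 0 ^ 2 + p 1 ^ 2 := by
    simp [EuclideanSpace.norm_sq_eq, Fin.sum_univ_two]
  have hg2 : ‖g‖ ^ 2 = g 0 ^ 2 + g 1 ^ 2 := by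
    simp [EuclideanSpace.norm_sq_eq, Fin.sum_univ_two]
  have hp0 : p 0 ^ 2 ≤ S ^ 2 := calc
    p 0 ^ 2 ≤ ‖p‖ ^ 2 := by rw [hp2]; linarith [sq_nonneg (p 1)]
    _ ≤ S ^ 2 := pow_le_pow_left₀ (norm_nonneg p) hpS 2
  have hsq : 4 * inner ℝ p g ^ 2 ≤ 8 * S ^ 2 * g 0 ^ 2 + ‖p‖ ^ 2 * g 1 ^ 2 := calc
    4 * inner ℝ p g ^ 2 ≤ 8 * (p 0 ^ 2 * g 0 ^ 2) + 8 * p 1 ^ 2 * g 1 ^ 2 := by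
      rw [hinner]; linarith [sq_nonneg (p 0 * g 0 - p 1 * g 1)]
    _ ≤ 8 * (S ^ 2 * g 0 ^ 2) + ‖p‖ ^ 2 * g 1 ^ 2 := by gcongr
    _ = _ := by ring
  have hrest : ‖p‖ ^ 2 * g 1 ^ 2 + g 1 ^ 2 ≤ (1 + ‖p‖ ^ 2 + ‖g‖ ^ 2) * ‖g‖ ^ 2 := calc
    _ = (1 + ‖p‖ ^ 2 + 0) * g 1 ^ 2 := by ring
    _ ≤ (1 + ‖p‖ ^ 2 + ‖g‖ ^ 2) * ‖g‖ ^ 2 := by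
      gcongr (1 + ‖p‖ ^ 2 + ?_) * ?_
      · positivity
      · rw [hg2]; linarith [sq_nonneg (g 0)]
  linarith

/-- If `p` is nearly parallel to the first axis, perturbing it along the second axis decreases the
average resistance. -/
theorem resistance_second_difference_le {S : ℝ} {p g : EuclideanSpace ℝ (Fin 2)} (hpS : ‖p‖ ≤ S)
    (hp : 8 * p 1 ^ 2 ≤ ‖p‖ ^ 2) (hg : ‖g‖ ≤ 1) :
    resistance ‖p + g‖ + resistance ‖p - g‖ - 2 * resistance ‖p‖ ≤
      16 * S ^ 2 * g 0 ^ 2 - 2 / ((S + 1) ^ 2 + 1) ^ 3 * g 1 ^ 2 := by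
  rw [resistance_second_difference]
  set D := (‖p + g‖ ^ 2 + 1) * (‖p - g‖ ^ 2 + 1) * (‖p‖ ^ 2 + 1) with hD
  have hD1 : 1 ≤ D := by
    refine one_le_mul_of_one_le_of_one_le (one_le_mul_of_one_le_of_one_le ?_ ?_) ?_ <;>
      exact le_add_of_nonneg_left (sq_nonneg _)
  have hDS : D ≤ ((S + 1) ^ 2 + 1) ^ 3 := by
    have hadd : ‖p + g‖ ≤ S + 1 := (norm_add_le _ _).trans (by gcongr)
    have hsub : ‖p - g‖ ≤ S + 1 := (norm_sub_le _ _).trans (by gcongr)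
    have hpS1 : ‖p‖ ≤ S + 1 := hpS.trans (by linarith)
    rw [hD, pow_three']
    gcongr
  calc _ ≤ 2 * (8 * S ^ 2 * g 0 ^ 2 - g 1 ^ 2) / D := by
        gcongr ?_ / _; linarith [four_mul_inner_sq_sub_le (g := g) hpS hp]
    _ = 16 * S ^ 2 * g 0 ^ 2 / D - 2 / D * g 1 ^ 2 := by ring
    _ ≤ 16 * S ^ 2 * g 0 ^ 2 / 1 - 2 / ((S + 1) ^ 2 + 1) ^ 3 * g 1 ^ 2 := by gcongr
    _ = _ := by rw [div_one]

section DirectionalDerivative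

variable {E : Type*} [NormedAddCommGroup E] [NormedSpace ℝ E]

theorem exists_fderiv_apply_ne_zero {ψ : E → ℝ} (hψ : Differentiable ℝ ψ)
    (hc : HasCompactSupport ψ) {x : E} (hx : ψ x ≠ 0) {v : E} (hv : v ≠ 0) :
    ∃ y, fderiv ℝ ψ y v ≠ 0 := by
  by_contra! hzero
  have hderiv (t : ℝ) : HasDerivAt (fun t : ℝ => ψ (x + t • v)) 0 t := by
    have hline : HasDerivAt (fun t : ℝ => x + t • v) v t := by
      simpa only [one_smul] using ((hasDerivAt_id' t).smul_const v).const_add x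
    exact hzero (x + t • v) ▸ (hψ (x + t • v)).hasFDerivAt.comp_hasDerivAt t hline
  have hconst := is_const_of_deriv_eq_zero (fun t => (hderiv t).differentiableAt)
    (fun t => (hderiv t).deriv)
  obtain ⟨R, hR⟩ := hc.isCompact.isBounded.exists_norm_le
  have hv0 : 0 < ‖v‖ := norm_pos_iff.2 hv
  have hfar : R < ‖x + ((|R| + ‖x‖ + 1) / ‖v‖) • v‖ := calc
    R < (|R| + ‖x‖ + 1) / ‖v‖ * ‖v‖ - ‖x‖ := by
      rw [div_mul_cancel₀ _ hv0.ne']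
      linarith [le_abs_self R]
    _ = ‖((|R| + ‖x‖ + 1) / ‖v‖) • v‖ - ‖x‖ := by rw [norm_smul_of_nonneg (by positivity)]
    _ ≤ _ := by rw [add_comm x]; exact norm_sub_le_norm_add _ _
  have hvanish : ψ (x + ((|R| + ‖x‖ + 1) / ‖v‖) • v) = 0 :=
    image_eq_zero_of_notMem_tsupport fun hmem => hfar.not_ge (hR _ hmem)
  refine hx ?_
  rw [← hvanish, ← hconst 0, zero_smul, add_zero]

variable [MeasurableSpace E] [BorelSpace E]

theorem integral_fderiv_apply_sq_pos (μ : Measure E) [μ.IsAddHaarMeasure] {ψ : E → ℝ}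
    (hψ : ContDiff ℝ 1 ψ) (hc : HasCompactSupport ψ) {x : E} (hx : ψ x ≠ 0) {v : E} (hv : v ≠ 0) :
    0 < ∫ y, fderiv ℝ ψ y v ^ 2 ∂μ := by
  obtain ⟨y, hy⟩ := exists_fderiv_apply_ne_zero (hψ.differentiable one_ne_zero) hc hx hv
  have := hψ.continuous_fderiv one_ne_zero
  have hsupp : HasCompactSupport fun y => fderiv ℝ ψ y v ^ 2 :=
    (hc.fderiv_apply ℝ v).comp_left (g := (· ^ 2)) (zero_pow two_ne_zero)
  exact Continuous.integral_pos_of_hasCompactSupport_nonneg_nonzero (by fun_prop) hsupp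
    (fun y => sq_nonneg _) (pow_ne_zero 2 hy)

variable [FiniteDimensional ℝ E]

theorem integral_comp_linearMap_sub {F : Type*} [NormedAddCommGroup F] [NormedSpace ℝ F]
    (μ : Measure E) [μ.IsAddHaarMeasure] {L : E →ₗ[ℝ] E} (hL : LinearMap.det L ≠ 0) (f : E → F)
    (a : E) : ∫ x, f (L (x - a)) ∂μ = |(LinearMap.det L)⁻¹| • ∫ x, f x ∂μ := by
  have hemb : MeasurableEmbedding L :=
    (L.equivOfDetNeZero hL).toContinuousLinearEquiv.toHomeomorph.measurableEmbedding
  rw [integral_sub_right_eq_self (fun x => f (L x)), ← hemb.integral_map,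
    Measure.map_linearMap_addHaar_eq_smul_addHaar μ hL, integral_smul_measure,
    ENNReal.toReal_ofReal (abs_nonneg _)]

theorem integral_fderiv_comp_clm_sub_sq (μ : Measure E) [μ.IsAddHaarMeasure] {ψ : E → ℝ}
    (hψ : Differentiable ℝ ψ) {L : E →L[ℝ] E} (hL : LinearMap.det (L : E →ₗ[ℝ] E) ≠ 0) (a v : E) :
    ∫ x, fderiv ℝ (fun x => ψ (L (x - a))) x v ^ 2 ∂μ =
      |(LinearMap.det (L : E →ₗ[ℝ] E))⁻¹| * ∫ x, fderiv ℝ ψ x (L v) ^ 2 ∂μ := by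
  have hfderiv (x : E) : fderiv ℝ (fun x => ψ (L (x - a))) x v = fderiv ℝ ψ (L (x - a)) (L v) := by
    have hinner := L.hasFDerivAt.comp x ((hasFDerivAt_id x).sub_const a)
    exact DFunLike.congr_fun ((hψ _).hasFDerivAt.comp x hinner).fderiv v
  simp only [hfderiv]
  exact integral_comp_linearMap_sub μ hL (fun y => fderiv ℝ ψ y (L v) ^ 2) a

end DirectionalDerivative

section OscillatingBump

variable {E : Type*} [NormedAddCommGroup E] [InnerProductSpace ℝ E]

/-- The linear map stretching by the factor `N` along the unit vector `e` and fixing the orthogonal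
complement of `e`. -/
noncomputable def stretch (e : E) (N : ℝ) : E →L[ℝ] E :=
  .id ℝ E + ((N - 1) • innerSL ℝ e).smulRight e

theorem stretch_apply (e : E) (N : ℝ) (x : E) :
    stretch e N x = x + ((N - 1) * inner ℝ e x) • e := rfl

theorem stretch_apply_self {e : E} (he : ‖e‖ = 1) (N : ℝ) : stretch e N e = N • e := by
  rw [stretch_apply, real_inner_self_eq_norm_sq, he]
  module

theorem stretch_apply_of_inner_eq_zero {e v : E} (hv : inner ℝ e v = 0) (N : ℝ) :
    stretch e N v = v := by
  rw [stretch_apply, hv, mul_zero, zero_smul, add_zero]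

theorem norm_le_norm_stretch {e : E} (he : ‖e‖ = 1) {N : ℝ} (hN : 1 ≤ N) (x : E) :
    ‖x‖ ≤ ‖stretch e N x‖ := by
  refine le_of_sq_le_sq ?_ (norm_nonneg _)
  have hgain : 0 ≤ (N ^ 2 - 1) * inner ℝ e x ^ 2 := mul_nonneg (by nlinarith) (sq_nonneg _)
  calc ‖x‖ ^ 2 ≤ ‖x‖ ^ 2 + (N ^ 2 - 1) * inner ℝ e x ^ 2 := le_add_of_nonneg_right hgain
    _ = ‖stretch e N x‖ ^ 2 := by
      rw [stretch_apply, norm_add_sq_real, norm_smul, he, inner_smul_right, real_inner_comm e x,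
        Real.norm_eq_abs, mul_one, sq_abs]
      ring

theorem tsupport_comp_stretch_sub_subset {ψ : E → ℝ} {δ : ℝ} (hψ : tsupport ψ ⊆ closedBall 0 δ)
    {e : E} (he : ‖e‖ = 1) {N : ℝ} (hN : 1 ≤ N) (a : E) :
    tsupport (fun x => ψ (stretch e N (x - a))) ⊆ closedBall a δ := by
  refine closure_minimal (fun x hx => ?_) isClosed_closedBall
  have hmem : stretch e N (x - a) ∈ closedBall (0 : E) δ := hψ (subset_tsupport ψ hx)
  exact mem_closedBall_iff_norm.2
    ((norm_le_norm_stretch he hN _).trans (mem_closedBall_zero_iff.1 hmem))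

theorem det_stretch [FiniteDimensional ℝ E] {e : E} (he : ‖e‖ = 1) (N : ℝ) :
    LinearMap.det (stretch e N : E →ₗ[ℝ] E) = N := by
  have : (stretch e N : E →ₗ[ℝ] E) =
      LinearMap.transvection ((N - 1) • (innerSL ℝ e : E →ₗ[ℝ] ℝ)) e := rfl
  rw [this, LinearMap.transvection.det]
  simp [he]

theorem exists_oscillating_bump [FiniteDimensional ℝ E] [MeasurableSpace E] [BorelSpace E]
    (μ : Measure E) [μ.IsAddHaarMeasure] {e v : E} (he : ‖e‖ = 1)
    (hv : inner ℝ e v = 0) (K : ℝ) {U : Set E} (hU : IsOpen U) {a : E} (ha : a ∈ U) :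
    ∃ q : E → ℝ, ContDiff ℝ 2 q ∧ HasCompactSupport q ∧ tsupport q ⊆ U ∧
      K * ∫ x, fderiv ℝ q x v ^ 2 ∂μ < ∫ x, fderiv ℝ q x e ^ 2 ∂μ := by
  obtain ⟨δ, hδ, hδU⟩ := Metric.nhds_basis_closedBall.mem_iff.1 (hU.mem_nhds ha)
  let ψ : ContDiffBump (0 : E) := ⟨δ / 2, δ, by positivity, by linarith⟩
  have hψ : Differentiable ℝ ψ := (ψ.contDiff (n := 1)).differentiable one_ne_zero
  have hpos : 0 < ∫ x, fderiv ℝ ψ x e ^ 2 ∂μ :=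
    integral_fderiv_apply_sq_pos μ (ψ.contDiff (n := 1)) ψ.hasCompactSupport
      (ψ.pos_of_mem_ball (mem_ball_self ψ.rOut_pos)).ne' (norm_ne_zero_iff.1 (he ▸ one_ne_zero))
  -- Squeezing by `N` multiplies the ratio of the two integrals by `N ^ 2`.
  obtain ⟨N, hN⟩ := exists_gt
    (max 1 (K * (∫ x, fderiv ℝ ψ x v ^ 2 ∂μ) / ∫ x, fderiv ℝ ψ x e ^ 2 ∂μ))
  obtain ⟨hN1, hNK⟩ := max_lt_iff.1 hN
  have hdet : LinearMap.det (stretch e N : E →ₗ[ℝ] E) ≠ 0 := by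
    rw [det_stretch he]
    positivity
  have hsupp := tsupport_comp_stretch_sub_subset ψ.tsupport_eq.subset he hN1.le a
  refine ⟨fun x => ψ (stretch e N (x - a)),
    ψ.contDiff.comp ((stretch e N).contDiff.comp (contDiff_id.sub contDiff_const)),
    (isCompact_closedBall a δ).of_isClosed_subset (isClosed_tsupport _) hsupp,
    hsupp.trans hδU, ?_⟩
  simp only [integral_fderiv_comp_clm_sub_sq μ hψ hdet, stretch_apply_self he,
    stretch_apply_of_inner_eq_zero hv, map_smul, smul_eq_mul, mul_pow, integral_const_mul]
  rw [mul_left_comm]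
  refine mul_lt_mul_of_pos_left ?_ (abs_pos.2 (inv_ne_zero hdet))
  calc K * ∫ x, fderiv ℝ ψ x v ^ 2 ∂μ < N * ∫ x, fderiv ℝ ψ x e ^ 2 ∂μ := (div_lt_iff₀ hpos).1 hNK
    _ ≤ N ^ 2 * ∫ x, fderiv ℝ ψ x e ^ 2 ∂μ := by
      gcongr
      exact le_self_pow₀ hN1.le two_ne_zero

end OscillatingBump

section GradientOfPerturbation

variable {E : Type*} [NormedAddCommGroup E] [InnerProductSpace ℝ E] [CompleteSpace E]

theorem gradient_eq_zero_of_notMem_tsupport {q : E → ℝ} {x : E} (hx : x ∉ tsupport q) :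
    gradient q x = 0 := by
  rw [gradient, fderiv_of_notMem_tsupport ℝ hx, map_zero]

theorem gradient_add_const_mul {u q : E → ℝ} {x : E}
    (hu : x ∈ tsupport q → DifferentiableAt ℝ u x) (hq : DifferentiableAt ℝ q x) (ε : ℝ) :
    gradient (fun y => u y + ε * q y) x = gradient u x + ε • gradient q x := by
  by_cases hx : x ∈ tsupport q
  · simp only [gradient]
    rw [fderiv_fun_add (hu hx) (hq.const_mul ε), fderiv_const_mul hq, map_add, map_smul]
  · have hq0 : q =ᶠ[𝓝 x] 0 := notMem_tsupport_iff_eventuallyEq.1 hx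
    have huq : (fun y => u y + ε * q y) =ᶠ[𝓝 x] u := by
      filter_upwards [hq0] with y hy
      rw [hy, Pi.zero_apply, mul_zero, add_zero]
    rw [huq.gradient_eq, gradient_eq_zero_of_notMem_tsupport hx, smul_zero, add_zero]

theorem eventually_norm_smul_gradient_lt {q : E → ℝ} (hq : ContDiff ℝ 1 q)
    (hqc : HasCompactSupport q) {r : ℝ} (hr : 0 < r) :
    ∀ᶠ ε : ℝ in 𝓝 0, ∀ x, ‖ε • gradient q x‖ < r := by
  obtain ⟨C, hC⟩ := (hq.continuous_fderiv one_ne_zero).bounded_above_of_compact_support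
    (hqc.fderiv ℝ)
  have hlim : Tendsto (fun ε : ℝ => ‖ε‖ * C) (𝓝 0) (𝓝 0) :=
    (by fun_prop : Continuous fun ε : ℝ => ‖ε‖ * C).tendsto' 0 0 (by rw [norm_zero, zero_mul])
  filter_upwards [hlim.eventually_lt_const hr] with ε hε x
  calc ‖ε • gradient q x‖ = ‖ε‖ * ‖fderiv ℝ q x‖ := by
        rw [norm_smul, gradient, LinearIsometryEquiv.norm_map]
    _ ≤ ‖ε‖ * C := by gcongr; exact hC x
    _ < r := hε

theorem gradient_apply_eq_fderiv {n : ℕ} (f : EuclideanSpace ℝ (Fin n) → ℝ)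
    (x : EuclideanSpace ℝ (Fin n)) (i : Fin n) :
    gradient f x i = fderiv ℝ f x (EuclideanSpace.single i 1) := by
  rw [← inner_gradient_left, EuclideanSpace.inner_single_right]
  simp

end GradientOfPerturbation

section SecondVariation

theorem integrable_fderiv_apply_sq {E : Type*} [NormedAddCommGroup E] [NormedSpace ℝ E]
    [MeasurableSpace E] [BorelSpace E] {μ : Measure E} [IsFiniteMeasureOnCompacts μ] {q : E → ℝ}
    (hq : ContDiff ℝ 1 q) (hc : HasCompactSupport q) (v : E) :
    Integrable (fun x => fderiv ℝ q x v ^ 2) μ := by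
  have := hq.continuous_fderiv one_ne_zero
  exact Continuous.integrable_of_hasCompactSupport (by fun_prop)
    ((hc.fderiv_apply ℝ v).comp_left (g := (· ^ 2)) (zero_pow two_ne_zero))

theorem setIntegral_fderiv_apply_sq {E : Type*} [NormedAddCommGroup E] [NormedSpace ℝ E]
    [MeasurableSpace E] {μ : Measure E} {q : E → ℝ} {s : Set E} (hs : tsupport q ⊆ s) (v : E) :
    ∫ x in s, fderiv ℝ q x v ^ 2 ∂μ = ∫ x, fderiv ℝ q x v ^ 2 ∂μ :=
  setIntegral_eq_integral_of_forall_compl_eq_zero fun x hx => by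
    rw [fderiv_of_notMem_tsupport ℝ fun h => hx (hs h), zero_apply, zero_pow two_ne_zero]

theorem integrable_resistance {α : Type*} [MeasurableSpace α] {μ : Measure α} [IsFiniteMeasure μ]
    {s : α → ℝ} (hs : AEMeasurable s μ) : Integrable (fun x => resistance (s x)) μ := by
  simpa only [one_mul] using integrable_mul_resistance (integrable_const (1 : ℝ)) hs

theorem integrableOn_Omega_resistance_norm_gradient (w : EuclideanSpace ℝ (Fin 2) → ℝ) :
    IntegrableOn (fun x => resistance ‖gradient w x‖) Omega :=
  have : IsFiniteMeasure (volume.restrict Omega) :=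
    isFiniteMeasure_restrict.2 measure_ball_lt_top.ne
  integrable_resistance (measurable_norm_gradient w).aemeasurable

theorem J_add_J_sub_two_mul_J (v w u : EuclideanSpace ℝ (Fin 2) → ℝ) :
    J v + J w - 2 * J u = ∫ x in Omega, (resistance ‖gradient v x‖ + resistance ‖gradient w x‖ -
      2 * resistance ‖gradient u x‖) := by
  have hint := integrableOn_Omega_resistance_norm_gradient
  have hadd : IntegrableOn (fun x => resistance ‖gradient v x‖ + resistance ‖gradient w x‖)
      Omega := (hint v).add (hint w)
  simp only [J_eq_setIntegral_resistance]
  rw [integral_sub hadd ((hint u).const_mul 2), integral_add (hint v) (hint w), integral_const_mul]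

variable {u q : EuclideanSpace ℝ (Fin 2) → ℝ} {S : ℝ}

theorem resistance_gradient_second_difference_le {x : EuclideanSpace ℝ (Fin 2)} {ε : ℝ}
    (hq : DifferentiableAt ℝ q x) (hu : x ∈ tsupport q → DifferentiableAt ℝ u x)
    (hS : x ∈ tsupport q → ‖gradient u x‖ ≤ S)
    (hcone : x ∈ tsupport q → 8 * gradient u x 1 ^ 2 ≤ ‖gradient u x‖ ^ 2)
    (hε : ‖ε • gradient q x‖ ≤ 1) :
    resistance ‖gradient (fun y => u y + ε * q y) x‖ +
        resistance ‖gradient (fun y => u y + -ε * q y) x‖ - 2 * resistance ‖gradient u x‖ ≤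
      ε ^ 2 * (16 * S ^ 2 * fderiv ℝ q x (EuclideanSpace.single 0 1) ^ 2 -
        2 / ((S + 1) ^ 2 + 1) ^ 3 * fderiv ℝ q x (EuclideanSpace.single 1 1) ^ 2) := by
  rw [gradient_add_const_mul hu hq, gradient_add_const_mul hu hq, neg_smul, ← sub_eq_add_neg]
  simp only [← gradient_apply_eq_fderiv]
  by_cases hx : x ∈ tsupport q
  · convert resistance_second_difference_le (hS hx) (hcone hx) hε using 1
    simp only [PiLp.smul_apply, smul_eq_mul]
    ring
  · rw [gradient_eq_zero_of_notMem_tsupport hx, smul_zero, add_zero, sub_zero, PiLp.zero_apply,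
      PiLp.zero_apply]
    exact le_of_eq (by ring)

theorem eventually_J_add_J_lt (hq : ContDiff ℝ 1 q) (hqc : HasCompactSupport q)
    (hqΩ : tsupport q ⊆ Omega) (hu : ∀ x ∈ tsupport q, DifferentiableAt ℝ u x)
    (hS : ∀ x ∈ tsupport q, ‖gradient u x‖ ≤ S)
    (hcone : ∀ x ∈ tsupport q, 8 * gradient u x 1 ^ 2 ≤ ‖gradient u x‖ ^ 2)
    (hq01 : 8 * S ^ 2 * ((S + 1) ^ 2 + 1) ^ 3 *
        ∫ x, fderiv ℝ q x (EuclideanSpace.single 0 1) ^ 2 <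
      ∫ x, fderiv ℝ q x (EuclideanSpace.single 1 1) ^ 2) :
    ∀ᶠ ε : ℝ in 𝓝[≠] 0,
      J (fun x => u x + ε * q x) + J (fun x => u x + -ε * q x) < 2 * J u := by
  set D := ((S + 1) ^ 2 + 1) ^ 3
  have hD0 : 0 < D := by positivity
  have hint := integrableOn_Omega_resistance_norm_gradient
  have hsq (i : Fin 2) :
      IntegrableOn (fun x => fderiv ℝ q x (EuclideanSpace.single i 1) ^ 2) Omega :=
    (integrable_fderiv_apply_sq hq hqc _).integrableOn
  filter_upwards [nhdsWithin_le_nhds (eventually_norm_smul_gradient_lt hq hqc one_pos),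
    self_mem_nhdsWithin] with ε hε hε0
  rw [← sub_neg, J_add_J_sub_two_mul_J]
  calc _ ≤ ∫ x in Omega, ε ^ 2 * (16 * S ^ 2 * fderiv ℝ q x (EuclideanSpace.single 0 1) ^ 2 -
        2 / D * fderiv ℝ q x (EuclideanSpace.single 1 1) ^ 2) := by
        refine integral_mono (((hint _).add (hint _)).sub ((hint _).const_mul 2))
          ((((hsq 0).const_mul _).sub ((hsq 1).const_mul _)).const_mul _) fun x => ?_
        exact resistance_gradient_second_difference_le (hq.differentiable one_ne_zero x) (hu x)
          (hS x) (hcone x) (hε x).le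
    _ = 2 * ε ^ 2 / D * (8 * S ^ 2 * D * (∫ x, fderiv ℝ q x (EuclideanSpace.single 0 1) ^ 2) -
        ∫ x, fderiv ℝ q x (EuclideanSpace.single 1 1) ^ 2) := by
        rw [integral_const_mul, integral_sub ((hsq 0).const_mul _) ((hsq 1).const_mul _),
          integral_const_mul, integral_const_mul, setIntegral_fderiv_apply_sq hqΩ,
          setIntegral_fderiv_apply_sq hqΩ]
        field_simp
        ring
    _ < 0 := mul_neg_of_pos_of_neg (by have : ε ≠ 0 := hε0; positivity) (sub_neg.2 hq01)

end SecondVariation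

section NewtonSlope

/-- The multiplier-normalized radius at which Newton's optimal profile has slope `-s`, namely
`(1 + s²)² / (2s)` for `1 ≤ s`, continued by `2s` for `s ≤ 1` so as to become an increasing
bijection of the line. -/
noncomputable def newtonRadius (s : ℝ) : ℝ :=
  2 * s + (max s 1 ^ 2 - 1) ^ 2 / (2 * max s 1)

theorem newtonRadius_of_le_one {s : ℝ} (hs : s ≤ 1) : newtonRadius s = 2 * s := by
  rw [newtonRadius, max_eq_right hs]
  norm_num

theorem newtonRadius_of_one_le {s : ℝ} (hs : 1 ≤ s) :
    newtonRadius s = (1 + s ^ 2) ^ 2 / (2 * s) := by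
  have : s ≠ 0 := by positivity
  rw [newtonRadius, max_eq_left hs]
  field_simp
  ring

theorem continuous_newtonRadius : Continuous newtonRadius := by
  have (s : ℝ) : 2 * max s 1 ≠ 0 := by positivity
  unfold newtonRadius
  fun_prop (disch := assumption)

theorem sq_sub_one_sq_div_sub_mem_Icc {a b : ℝ} (ha : 1 ≤ a) (hab : a ≤ b) :
    (b ^ 2 - 1) ^ 2 / (2 * b) - (a ^ 2 - 1) ^ 2 / (2 * a) ∈ Icc 0 (3 / 2 * b ^ 2 * (b - a)) := by
  have ha0 : 0 < a := by positivity
  have hb0 : 0 < b := ha0.trans_le hab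
  have hfactor : (b ^ 2 - 1) ^ 2 / (2 * b) - (a ^ 2 - 1) ^ 2 / (2 * a) =
      (b - a) * ((a ^ 2 + a * b + b ^ 2 - 2 - 1 / (a * b)) / 2) := by
    field_simp
    ring
  have hsub : 0 ≤ b - a := sub_nonneg.2 hab
  have hpos : 0 ≤ 1 / (a * b) := by positivity
  have hone : 1 / (a * b) ≤ 1 := (div_le_one (by positivity)).2 (by nlinarith)
  rw [hfactor, mul_comm _ (b - a)]
  exact ⟨mul_nonneg hsub (by nlinarith), mul_le_mul_of_nonneg_left (by nlinarith) hsub⟩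

theorem newtonRadius_sub_mem_Icc {s t : ℝ} (hst : s ≤ t) :
    newtonRadius t - newtonRadius s ∈
      Icc (2 * (t - s)) ((2 + 3 / 2 * max t 1 ^ 2) * (t - s)) := by
  obtain ⟨hlower, hupper⟩ :=
    sq_sub_one_sq_div_sub_mem_Icc (le_max_right s 1) (max_le_max_right 1 hst)
  have hmax : max t 1 - max s 1 ≤ t - s := by
    linarith [max_sub_max_le_max t 1 s 1, max_eq_left (by linarith : (1 : ℝ) - 1 ≤ t - s)]
  have hmul := mul_le_mul_of_nonneg_left hmax (by positivity : 0 ≤ 3 / 2 * max t 1 ^ 2)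
  constructor <;> simp only [newtonRadius] <;> linarith

theorem strictMono_newtonRadius : StrictMono newtonRadius := fun s t hst => by
  linarith [(newtonRadius_sub_mem_Icc hst.le).1]

theorem two_mul_le_newtonRadius (s : ℝ) : 2 * s ≤ newtonRadius s :=
  le_add_of_nonneg_right (by positivity)

theorem surjective_newtonRadius : Function.Surjective newtonRadius := by
  refine continuous_newtonRadius.surjective
    (tendsto_atTop_mono two_mul_le_newtonRadius (tendsto_id.const_mul_atTop two_pos)) ?_
  refine (tendsto_id.const_mul_atBot two_pos).congr' ?_
  filter_upwards [eventually_le_atBot 1] with s hs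
  exact (newtonRadius_of_le_one hs).symm

/-- The slope, up to sign, of Newton's optimal profile as a function of the multiplier-normalized
radius: the inverse of `newtonRadius`. -/
noncomputable def newtonSlope : ℝ ≃o ℝ :=
  (strictMono_newtonRadius.orderIsoOfSurjective newtonRadius surjective_newtonRadius).symm

theorem newtonRadius_newtonSlope (ρ : ℝ) : newtonRadius (newtonSlope ρ) = ρ :=
  newtonSlope.symm_apply_apply ρ

theorem newtonSlope_newtonRadius (s : ℝ) : newtonSlope (newtonRadius s) = s :=
  newtonSlope.apply_symm_apply s

theorem newtonSlope_zero : newtonSlope 0 = 0 := by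
  simpa only [newtonRadius_of_le_one zero_le_one, mul_zero] using newtonSlope_newtonRadius 0

theorem newtonSlope_two : newtonSlope 2 = 1 := by
  simpa only [newtonRadius_of_le_one le_rfl, mul_one] using newtonSlope_newtonRadius 1

theorem sub_le_mul_newtonSlope_sub {x y T : ℝ} (hxy : x ≤ y) (hyT : y ≤ T) :
    y - x ≤ (2 + 3 / 2 * max (newtonSlope T) 1 ^ 2) * (newtonSlope y - newtonSlope x) := by
  have hslope : newtonSlope x ≤ newtonSlope y := newtonSlope.monotone hxy
  calc y - x = newtonRadius (newtonSlope y) - newtonRadius (newtonSlope x) := by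
        rw [newtonRadius_newtonSlope, newtonRadius_newtonSlope]
    _ ≤ (2 + 3 / 2 * max (newtonSlope y) 1 ^ 2) * (newtonSlope y - newtonSlope x) :=
      (newtonRadius_sub_mem_Icc hslope).2
    _ ≤ _ := by
      have := sub_nonneg.2 hslope
      gcongr

/-- The slope minimizing the Lagrangian `ρ / (τ² + 1) + τ` over `0 ≤ τ`. -/
noncomputable def optimalSlope (ρ : ℝ) : ℝ :=
  if ρ ≤ 2 then 0 else newtonSlope ρ

theorem zero_lagrangian_le {ρ τ : ℝ} (hρ0 : 0 ≤ ρ) (hρ : ρ ≤ 2) (hτ : 0 ≤ τ) :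
    ρ * resistance 0 + 0 ≤ ρ * resistance τ + τ := by
  have hdiff : ρ * resistance τ + τ - (ρ * resistance 0 + 0) =
      τ * (τ ^ 2 + 1 - ρ * τ) / (τ ^ 2 + 1) := by
    simp only [resistance]
    field_simp
    ring
  have hquad : 0 ≤ τ ^ 2 + 1 - ρ * τ := by
    nlinarith [sq_nonneg (τ - 1)]
  exact sub_nonneg.1 (hdiff ▸ by positivity)

theorem newtonRadius_lagrangian_le {s τ : ℝ} (hs : 1 ≤ s) (hτ : 0 ≤ τ) :
    newtonRadius s * resistance s + s ≤ newtonRadius s * resistance τ + τ := by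
  have hs0 : 0 < s := by positivity
  have hdiff : newtonRadius s * resistance τ + τ - (newtonRadius s * resistance s + s) =
      (s - τ) ^ 2 * (s ^ 2 + 2 * s * τ - 1) / (2 * s * (τ ^ 2 + 1)) := by
    rw [newtonRadius_of_one_le hs]
    simp only [resistance]
    field_simp
    ring
  have hfactor : 0 ≤ s ^ 2 + 2 * s * τ - 1 := by
    nlinarith [mul_nonneg hs0.le hτ]
  exact sub_nonneg.1 (hdiff ▸ by positivity)

theorem isMinOn_optimalSlope {ρ : ℝ} (hρ : 0 ≤ ρ) :
    IsMinOn (fun τ => ρ * resistance τ + τ) (Ici 0) (optimalSlope ρ) := by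
  refine isMinOn_iff.2 fun τ hτ => ?_
  unfold optimalSlope
  split_ifs with h2
  · exact zero_lagrangian_le hρ h2 hτ
  · have hs : 1 ≤ newtonSlope ρ := newtonSlope_two ▸ newtonSlope.monotone (not_le.1 h2).le
    simpa only [newtonRadius_newtonSlope] using newtonRadius_lagrangian_le hs hτ

end NewtonSlope

section NewtonPotential

/-- The decreasing function with slope `-newtonSlope (T * r)` at `r` and vanishing at `1`, that is,
the profile of Newton's optimal body for the multiplier `1 / T` before truncation. -/
noncomputable def newtonPotential (T r : ℝ) : ℝ :=
  ∫ x in r..1, newtonSlope (T * x)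

theorem continuous_newtonSlope_mul (T : ℝ) : Continuous fun x => newtonSlope (T * x) :=
  newtonSlope.continuous.comp (continuous_const_mul T)

theorem hasDerivAt_newtonPotential (T r : ℝ) :
    HasDerivAt (newtonPotential T) (-newtonSlope (T * r)) r :=
  intervalIntegral.integral_hasDerivAt_left ((continuous_newtonSlope_mul T).intervalIntegrable _ _)
    ((continuous_newtonSlope_mul T).stronglyMeasurableAtFilter _ _)
    (continuous_newtonSlope_mul T).continuousAt

theorem continuous_newtonPotential (T : ℝ) : Continuous (newtonPotential T) :=
  continuous_iff_continuousAt.2 fun r => (hasDerivAt_newtonPotential T r).continuousAt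

theorem newtonPotential_one (T : ℝ) : newtonPotential T 1 = 0 :=
  intervalIntegral.integral_same

theorem newtonSlope_pos {ρ : ℝ} (hρ : 0 < ρ) : 0 < newtonSlope ρ :=
  newtonSlope_zero ▸ newtonSlope.strictMono hρ

theorem strictAntiOn_newtonPotential {T : ℝ} (hT : 0 < T) :
    StrictAntiOn (newtonPotential T) (Ici 0) := by
  refine strictAntiOn_of_deriv_neg (convex_Ici 0) (continuous_newtonPotential T).continuousOn
    fun r hr => ?_
  rw [interior_Ici] at hr
  rw [(hasDerivAt_newtonPotential T r).deriv, neg_lt_zero]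
  exact newtonSlope_pos (mul_pos hT hr)

theorem exists_strongConcaveOn_newtonPotential_norm {E : Type*} [NormedAddCommGroup E]
    [InnerProductSpace ℝ E] {T : ℝ} (hT : 0 < T) :
    ∃ c, 0 < c ∧ StrongConcaveOn (ball (0 : E) 1) c fun x => newtonPotential T ‖x‖ := by
  set K := 2 + 3 / 2 * max (newtonSlope T) 1 ^ 2
  have hK : 0 < K := by positivity
  set ψ : ℝ → ℝ := fun r => newtonPotential T r + T / K / 2 * r ^ 2
  have hψ (r : ℝ) : HasDerivAt ψ (T / K * r - newtonSlope (T * r)) r := by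
    refine ((hasDerivAt_newtonPotential T r).add
      ((hasDerivAt_pow 2 r).const_mul (T / K / 2))).congr_deriv ?_
    push_cast
    ring
  have hψc : Continuous ψ := continuous_iff_continuousAt.2 fun r => (hψ r).continuousAt
  have hanti : AntitoneOn (deriv ψ) (Ico 0 1) := by
    intro r _ s hs hrs
    rw [(hψ r).deriv, (hψ s).deriv]
    have hslope := sub_le_mul_newtonSlope_sub (mul_le_mul_of_nonneg_left hrs hT.le)
      (mul_le_of_le_one_right hT.le hs.2.le)
    have : T / K * (s - r) ≤ newtonSlope (T * s) - newtonSlope (T * r) := by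
      rw [div_mul_eq_mul_div, div_le_iff₀' hK, mul_sub]
      exact hslope
    linarith
  have hconc : ConcaveOn ℝ (Ico 0 1) ψ :=
    (hanti.mono interior_subset).concaveOn_of_deriv (convex_Ico 0 1) hψc.continuousOn
      fun r _ => (hψ r).differentiableAt.differentiableWithinAt
  have hdecr : AntitoneOn ψ (Ico 0 1) := by
    refine antitoneOn_of_deriv_nonpos (convex_Ico 0 1) hψc.continuousOn
      (fun r _ => (hψ r).differentiableAt.differentiableWithinAt) fun r hr => ?_
    have hr' := interior_subset hr
    have h0 : deriv ψ 0 = 0 := by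
      rw [(hψ 0).deriv, mul_zero, mul_zero, newtonSlope_zero, sub_zero]
    exact h0 ▸ hanti (left_mem_Ico.2 one_pos) hr' hr'.1
  exact ⟨T / K, div_pos hT hK, strongConcaveOn_iff_convex.2 (concaveOn_comp_norm hconc hdecr)⟩

theorem mul_newtonPotential_two_div {T : ℝ} (hT : T ≠ 0) :
    T * newtonPotential T (2 / T) = ∫ ρ in (2 : ℝ)..T, newtonSlope ρ := by
  rw [newtonPotential, intervalIntegral.mul_integral_comp_mul_left, mul_div_cancel₀ _ hT, mul_one]

theorem exists_mul_lt_integral_newtonSlope (M : ℝ) :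
    ∃ T, 2 < T ∧ M * T < ∫ ρ in (2 : ℝ)..T, newtonSlope ρ := by
  set N := 2 * |M| + 1
  have hR : 2 ≤ newtonRadius N := by
    linarith [two_mul_le_newtonRadius N, abs_nonneg M]
  have hint (a b : ℝ) : IntervalIntegrable newtonSlope volume a b :=
    newtonSlope.continuous.intervalIntegrable a b
  refine ⟨2 * newtonRadius N, by linarith, ?_⟩
  calc M * (2 * newtonRadius N) < newtonRadius N * N := by
        nlinarith [le_abs_self M]
    _ = ∫ _ in newtonRadius N..2 * newtonRadius N, N := by
      rw [intervalIntegral.integral_const, smul_eq_mul]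
      ring
    _ ≤ ∫ ρ in newtonRadius N..2 * newtonRadius N, newtonSlope ρ :=
      intervalIntegral.integral_mono_on (by linarith) intervalIntegrable_const (hint _ _)
        fun ρ hρ => newtonSlope_newtonRadius N ▸ newtonSlope.monotone hρ.1
    _ ≤ ∫ ρ in (2 : ℝ)..2 * newtonRadius N, newtonSlope ρ :=
      intervalIntegral.integral_mono_interval hR (by linarith) le_rfl
        ((ae_restrict_mem measurableSet_Ioc).mono fun ρ hρ =>
          (newtonSlope_pos (by linarith [hρ.1])).le) (hint _ _)

theorem exists_newtonPotential_eq {M : ℝ} (hM : 0 < M) :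
    ∃ T, 2 < T ∧ newtonPotential T (2 / T) = M := by
  obtain ⟨R, hR, hMR⟩ := exists_mul_lt_integral_newtonSlope M
  have hcont : Continuous fun T => (∫ ρ in (2 : ℝ)..T, newtonSlope ρ) - M * T :=
    (intervalIntegral.continuous_primitive
      (fun a b => newtonSlope.continuous.intervalIntegrable a b) 2).sub (continuous_const_mul M)
  obtain ⟨T, hT, hTM⟩ := intermediate_value_Ioo hR.le hcont.continuousOn
    (⟨by rw [intervalIntegral.integral_same]; linarith, sub_pos.2 hMR⟩ :
      (0 : ℝ) ∈ Ioo _ _)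
  have hT0 : 0 < T := two_pos.trans hT.1
  refine ⟨T, hT.1, mul_left_cancel₀ hT0.ne' ?_⟩
  rw [mul_newtonPotential_two_div hT0.ne', sub_eq_zero.1 hTM, mul_comm]

end NewtonPotential

section NewtonBody

/-- The radial profile of Newton's optimal body, flat up to the radius `2 / T`. -/
noncomputable def newtonProfile (T r : ℝ) : ℝ :=
  min (newtonPotential T (2 / T)) (newtonPotential T r)

/-- Newton's optimal body among the bodies of revolution of height `newtonPotential T (2 / T)`. -/
noncomputable def newtonBody (T : ℝ) (x : EuclideanSpace ℝ (Fin 2)) : ℝ :=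
  newtonProfile T ‖x‖

variable {T r : ℝ}

theorem newtonProfile_of_le (hT : 0 < T) (hr0 : 0 ≤ r) (hr : r ≤ 2 / T) :
    newtonProfile T r = newtonPotential T (2 / T) :=
  min_eq_left ((strictAntiOn_newtonPotential hT).antitoneOn hr0 (hr0.trans hr) hr)

theorem newtonProfile_of_ge (hT : 0 < T) (hr : 2 / T ≤ r) :
    newtonProfile T r = newtonPotential T r :=
  have h0 : 0 ≤ 2 / T := by positivity
  min_eq_right ((strictAntiOn_newtonPotential hT).antitoneOn h0 (h0.trans hr) hr)

theorem deriv_newtonProfile (hT : 0 < T) (hr0 : 0 < r) (hr : r ≠ 2 / T) :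
    deriv (newtonProfile T) r = -optimalSlope (T * r) := by
  simp only [optimalSlope, ← le_div_iff₀' hT]
  rcases hr.lt_or_gt with hlt | hgt
  · have hflat : newtonProfile T =ᶠ[𝓝 r] fun _ => newtonPotential T (2 / T) := by
      filter_upwards [Ioo_mem_nhds hr0 hlt] with s hs
      exact newtonProfile_of_le hT hs.1.le hs.2.le
    rw [if_pos hlt.le, hflat.deriv_eq, deriv_const, neg_zero]
  · have hsteep : newtonProfile T =ᶠ[𝓝 r] newtonPotential T := by
      filter_upwards [Ioi_mem_nhds hgt] with s hs
      exact newtonProfile_of_ge hT hs.le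
    rw [if_neg hgt.not_ge, hsteep.deriv_eq, (hasDerivAt_newtonPotential T r).deriv]

theorem optimalSlope_mul_eq_indicator (hT : 0 < T) :
    (fun r => optimalSlope (T * r)) = (Ioi (2 / T)).indicator fun r => newtonSlope (T * r) := by
  ext r
  simp only [optimalSlope, indicator_apply, mem_Ioi, div_lt_iff₀' hT, ← not_le, ite_not]

theorem integrableOn_optimalSlope_mul (hT : 0 < T) (a b : ℝ) :
    IntegrableOn (fun r => optimalSlope (T * r)) (Ioo a b) := by
  rw [optimalSlope_mul_eq_indicator hT]
  exact (((continuous_newtonSlope_mul T).integrableOn_Icc).mono_set Ioo_subset_Icc_self).indicator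
    measurableSet_Ioi

theorem setIntegral_optimalSlope_mul (hT : 2 ≤ T) :
    ∫ r in Ioo 0 1, optimalSlope (T * r) = newtonPotential T (2 / T) := by
  have hT0 : 0 < T := two_pos.trans_le hT
  have hIoo : Ioo 0 1 ∩ Ioi (2 / T) = Ioo (2 / T) 1 := by
    rw [inter_comm, Ioi_inter_Ioo, max_eq_left (by positivity)]
  rw [optimalSlope_mul_eq_indicator hT0, setIntegral_indicator measurableSet_Ioi, hIoo,
    newtonPotential, intervalIntegral.integral_of_le ((div_le_one hT0).2 hT),
    integral_Ioc_eq_integral_Ioo]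

theorem J_newtonBody (hT : 0 < T) :
    J (newtonBody T) =
      2 * volume.real Omega * ∫ r in Ioo (0 : ℝ) 1, r * resistance (optimalSlope (T * r)) := by
  rw [J_eq_of_radial (u := newtonBody T) (φ := newtonProfile T) fun _ _ => rfl]
  congr 1
  refine setIntegral_congr_ae measurableSet_Ioo ?_
  filter_upwards [Measure.ae_ne volume (2 / T)] with r hr hr01
  rw [deriv_newtonProfile hT hr01.1 hr, resistance, resistance, neg_sq]

theorem J_newtonBody_le_of_radial (hT : 2 ≤ T) {u : EuclideanSpace ℝ (Fin 2) → ℝ}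
    (hu : ConcaveOn ℝ Omega u) (huT : ∀ x ∈ Omega, u x ∈ Icc 0 (newtonPotential T (2 / T)))
    (hrad : ∀ x ∈ Omega, ∀ y ∈ Omega, ‖x‖ = ‖y‖ → u x = u y) : J (newtonBody T) ≤ J u := by
  have hT0 : 0 < T := two_pos.trans_le hT
  obtain ⟨φ, hφ, hφT, huφ⟩ := exists_profile_of_radial hu huT hrad
  rw [J_newtonBody hT0, J_eq_of_radial huφ]
  refine mul_le_mul_of_nonneg_left ?_ (by positivity)
  have hdescent : ∫ r in Ioo 0 1, |deriv φ r| ≤ ∫ r in Ioo 0 1, optimalSlope (T * r) :=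
    setIntegral_optimalSlope_mul hT ▸
      (setIntegral_abs_deriv_le_of_antitoneOn zero_le_one hφ).trans hφT
  have hweight : IntegrableOn (fun r : ℝ => r) (Ioo 0 1) :=
    continuous_id.integrableOn_Icc.mono_set Ioo_subset_Icc_self
  simpa only [resistance_abs] using
    integral_mul_resistance_le_of_isMinOn hT0 hweight (integrableOn_optimalSlope_mul hT0 0 1)
      (integrableOn_deriv_of_antitoneOn zero_le_one hφ).abs (.of_forall fun r => abs_nonneg _)
      hdescent ((ae_restrict_mem measurableSet_Ioo).mono fun r hr =>
        isMinOn_optimalSlope (mul_pos hT0 hr.1).le)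

theorem newtonBody_mem_Icc (hT : 2 ≤ T) {x : EuclideanSpace ℝ (Fin 2)} (hx : x ∈ Omega) :
    newtonBody T x ∈ Icc 0 (newtonPotential T (2 / T)) := by
  have hT0 : 0 < T := two_pos.trans_le hT
  have hanti := (strictAntiOn_newtonPotential hT0).antitoneOn
  have h1 : (1 : ℝ) ∈ Ici 0 := mem_Ici.2 zero_le_one
  refine ⟨le_min ?_ ?_, min_le_left _ _⟩ <;> rw [← newtonPotential_one T]
  · exact hanti (by positivity : 0 ≤ 2 / T) h1 ((div_le_one hT0).2 hT)
  · exact hanti (norm_nonneg x) h1 (mem_ball_zero_iff.1 hx).le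

theorem newtonPotential_mem_Ioo (hT : 0 < T) (hr : r ∈ Ioo (2 / T) 1) :
    newtonPotential T r ∈ Ioo 0 (newtonPotential T (2 / T)) := by
  have hanti := strictAntiOn_newtonPotential hT
  have h0 : 0 ≤ 2 / T := by positivity
  have hr0 : 0 ≤ r := h0.trans hr.1.le
  exact ⟨newtonPotential_one T ▸ hanti hr0 (mem_Ici.2 zero_le_one) hr.2, hanti h0 hr0 hr.1⟩

theorem hasGradientAt_newtonBody (hT : 0 < T) {x : EuclideanSpace ℝ (Fin 2)} (hx : 2 / T < ‖x‖) :
    HasGradientAt (newtonBody T) ((-newtonSlope (T * ‖x‖) / ‖x‖) • x) x := by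
  have hx0 : 0 < ‖x‖ := (by positivity : 0 < 2 / T).trans hx
  refine (hasGradientAt_comp_norm (norm_pos_iff.1 hx0)
    (hasDerivAt_newtonPotential T ‖x‖)).congr_of_eventuallyEq ?_
  filter_upwards [continuous_norm.continuousAt.eventually_const_lt hx] with y hy
  exact newtonProfile_of_ge hT hy.le

theorem norm_gradient_newtonBody_le (hT : 0 < T) {x : EuclideanSpace ℝ (Fin 2)} (hx : 2 / T < ‖x‖)
    (hx1 : ‖x‖ ≤ 1) : ‖gradient (newtonBody T) x‖ ≤ newtonSlope T := by
  have hx0 : 0 < ‖x‖ := (by positivity : 0 < 2 / T).trans hx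
  rw [(hasGradientAt_newtonBody hT hx).gradient, norm_smul, norm_div, norm_norm, norm_neg,
    div_mul_cancel₀ _ hx0.ne', Real.norm_of_nonneg (newtonSlope_pos (mul_pos hT hx0)).le]
  exact newtonSlope.monotone (mul_le_of_le_one_right hT.le hx1)

theorem gradient_newtonBody_apply_sq_le (hT : 0 < T) {x : EuclideanSpace ℝ (Fin 2)}
    (hx : 2 / T < ‖x‖) {i : Fin 2} {c : ℝ} (hxi : c * x i ^ 2 ≤ ‖x‖ ^ 2) :
    c * gradient (newtonBody T) x i ^ 2 ≤ ‖gradient (newtonBody T) x‖ ^ 2 := by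
  rw [(hasGradientAt_newtonBody hT hx).gradient, norm_smul, PiLp.smul_apply, smul_eq_mul, mul_pow,
    mul_pow, mul_left_comm, Real.norm_eq_abs, sq_abs]
  exact mul_le_mul_of_nonneg_left hxi (sq_nonneg _)

theorem newtonBody_add_eq_min (hT : 0 < T) {q : EuclideanSpace ℝ (Fin 2) → ℝ}
    (hq : tsupport q ⊆ {x | 2 / T < ‖x‖}) {ε : ℝ}
    (hε : ∀ x ∈ tsupport q, newtonPotential T ‖x‖ + ε * q x ≤ newtonPotential T (2 / T))
    (x : EuclideanSpace ℝ (Fin 2)) :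
    newtonBody T x + ε * q x =
      min (newtonPotential T (2 / T)) (newtonPotential T ‖x‖ + ε * q x) := by
  by_cases hx : x ∈ tsupport q
  · rw [min_eq_right (hε x hx), newtonBody, newtonProfile_of_ge hT (hq hx).le]
  · rw [image_eq_zero_of_notMem_tsupport hx, mul_zero, add_zero, add_zero]
    rfl

theorem eventually_newtonBody_add_admissible (hT : 2 ≤ T) {q : EuclideanSpace ℝ (Fin 2) → ℝ}
    (hq : ContDiff ℝ 2 q) (hqc : HasCompactSupport q)
    (hqT : tsupport q ⊆ {x | ‖x‖ ∈ Ioo (2 / T) 1}) :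
    ∀ᶠ ε : ℝ in 𝓝 0, ConcaveOn ℝ Omega (fun x => newtonBody T x + ε * q x) ∧
      ∀ x ∈ Omega, newtonBody T x + ε * q x ∈ Icc 0 (newtonPotential T (2 / T)) := by
  have hT0 : 0 < T := two_pos.trans_le hT
  obtain ⟨c, hc, hstrong⟩ :=
    exists_strongConcaveOn_newtonPotential_norm (E := EuclideanSpace ℝ (Fin 2)) hT0
  have hrange := eventually_forall_add_mul_mem_Ioo hqc
    ((continuous_newtonPotential T).comp continuous_norm) hq.continuous
    fun x hx => newtonPotential_mem_Ioo hT0 (hqT hx)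
  filter_upwards [eventually_concaveOn_add_const_mul hc hstrong hq hqc, hrange] with ε hconc hε
  refine ⟨((concaveOn_const _ (convex_ball 0 1)).inf hconc).congr fun x _ =>
    (newtonBody_add_eq_min hT0 (fun x hx => (hqT hx).1) (fun x hx => (hε x hx).2.le) x).symm,
    fun x hx => ?_⟩
  by_cases hxq : x ∈ tsupport q
  · rw [newtonBody, newtonProfile_of_ge hT0 (hqT hxq).1.le]
    exact Ioo_subset_Icc_self (hε x hxq)
  · rw [image_eq_zero_of_notMem_tsupport hxq, mul_zero, add_zero]
    exact newtonBody_mem_Icc hT hx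

theorem exists_oscillating_bump_annulus {a b : ℝ} (ha : 0 ≤ a) (hab : a < b) (c K : ℝ) :
    ∃ q : EuclideanSpace ℝ (Fin 2) → ℝ, ContDiff ℝ 2 q ∧ HasCompactSupport q ∧
      (∀ x ∈ tsupport q, ‖x‖ ∈ Ioo a b ∧ c * x 1 ^ 2 < ‖x‖ ^ 2) ∧
      K * ∫ x, fderiv ℝ q x (EuclideanSpace.single 0 1) ^ 2 <
        ∫ x, fderiv ℝ q x (EuclideanSpace.single 1 1) ^ 2 := by
  obtain ⟨m, hm⟩ := nonempty_Ioo.2 hab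
  have hm0 : 0 < m := ha.trans_lt hm.1
  have hnorm : ‖(EuclideanSpace.single 0 m : EuclideanSpace ℝ (Fin 2))‖ = m := by
    rw [PiLp.norm_single, Real.norm_of_nonneg hm0.le]
  have hopen : IsOpen {x : EuclideanSpace ℝ (Fin 2) | ‖x‖ ∈ Ioo a b ∧ c * x 1 ^ 2 < ‖x‖ ^ 2} :=
    (isOpen_Ioo.preimage continuous_norm).and (isOpen_lt (by fun_prop) (by fun_prop))
  exact exists_oscillating_bump volume (e := EuclideanSpace.single (1 : Fin 2) (1 : ℝ))
    (v := EuclideanSpace.single 0 1) (by simp) (by simp [EuclideanSpace.inner_single_left]) K hopen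
    (a := EuclideanSpace.single 0 m) ⟨hnorm.symm ▸ hm, by simpa [hnorm] using pow_pos hm0 2⟩

theorem exists_J_lt_J_newtonBody (hT : 2 < T) :
    ∃ v : EuclideanSpace ℝ (Fin 2) → ℝ, ConcaveOn ℝ Omega v ∧
      (∀ x ∈ Omega, v x ∈ Icc 0 (newtonPotential T (2 / T))) ∧ J v < J (newtonBody T) := by
  have hT0 : 0 < T := two_pos.trans hT
  set S := newtonSlope T
  obtain ⟨q, hq, hqc, hqU, hq01⟩ := exists_oscillating_bump_annulus (by positivity : 0 ≤ 2 / T)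
    ((div_lt_one hT0).2 hT) 8 (8 * S ^ 2 * ((S + 1) ^ 2 + 1) ^ 3)
  have hJ := eventually_J_add_J_lt (hq.of_le one_le_two) hqc
    (fun x hx => mem_ball_zero_iff.2 (hqU x hx).1.2)
    (fun x hx => (hasGradientAt_newtonBody hT0 (hqU x hx).1.1).differentiableAt)
    (fun x hx => norm_gradient_newtonBody_le hT0 (hqU x hx).1.1 (hqU x hx).1.2.le)
    (fun x hx => gradient_newtonBody_apply_sq_le hT0 (hqU x hx).1.1 (hqU x hx).2.le) hq01
  have hadm := eventually_newtonBody_add_admissible hT.le hq hqc fun x hx => (hqU x hx).1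
  have hadm_neg := (continuous_neg.tendsto' (0 : ℝ) 0 neg_zero).eventually hadm
  obtain ⟨ε, hJε, hpos, hneg⟩ := (hJ.and (nhdsWithin_le_nhds (hadm.and hadm_neg))).exists
  rcases lt_or_lt_of_add_lt_add (two_mul (J (newtonBody T)) ▸ hJε) with hlt | hlt
  · exact ⟨_, hpos.1, hpos.2, hlt⟩
  · exact ⟨_, hneg.1, hneg.2, hlt⟩

end NewtonBody

/-- Minimizers of Newton's problem in the class of concave functions are not
radially symmetric: there are points of equal norm with different values. -/
theorem minimizer_not_radially_symmetric (M : ℝ) (hM : 0 < M)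
    (u : EuclideanSpace ℝ (Fin 2) → ℝ)
    (hu : ConcaveOn ℝ Omega u) (huM : ∀ x ∈ Omega, u x ∈ Icc 0 M)
    (hmin : ∀ v : EuclideanSpace ℝ (Fin 2) → ℝ,
      ConcaveOn ℝ Omega v → (∀ x ∈ Omega, v x ∈ Icc 0 M) → J u ≤ J v) :
    ∃ x ∈ Omega, ∃ y ∈ Omega, ‖x‖ = ‖y‖ ∧ u x ≠ u y := by
  obtain ⟨T, hT, rfl⟩ := exists_newtonPotential_eq hM
  by_contra! hrad
  obtain ⟨v, hv, hvM, hJv⟩ := exists_J_lt_J_newtonBody hT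
  exact (hmin v hv hvM).not_gt (hJv.trans_le (J_newtonBody_le_of_radial hT.le hu huM hrad))
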